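/- arXiv:2505.09635 — 2 statements merged into one kernel-verified Lean document; each statement's English description precedes it below -/
import Mathlib

section
/- Let a < b be integers with b − a > 2 and R = ℤ[x]/((x−a)(x−b)). The ideal class group Cl(R) is isomorphic to the quotient of (ℤ/(b−a))^× by the subgroup {1, −1}. In particular |Cl(R)| = φ(b−a)/2. -/
open Polynomial FractionalIdeal

/-- The subgroup of principal invertible fractional ideals of a commutative ring `R`,
inside the group of invertible fractional ideals of `R` in its total quotient ring. -/
noncomputable def principalUnits (R : Type*) [CommRing R] :
    Subgroup (FractionalIdeal (nonZeroDivisors R) (FractionRing R))ˣ where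
  carrier := {I | ∃ k : (FractionRing R)ˣ,
    (I : FractionalIdeal (nonZeroDivisors R) (FractionRing R)) =
      spanSingleton (nonZeroDivisors R) (k : FractionRing R)}
  mul_mem' := by
    rintro I J ⟨k, hk⟩ ⟨l, hl⟩
    exact ⟨k * l, by
      simp only [Units.val_mul, hk, hl, spanSingleton_mul_spanSingleton]⟩
  one_mem' := ⟨1, by simp [spanSingleton_one]⟩
  inv_mem' := by
    rintro I ⟨k, hk⟩
    refine ⟨k⁻¹, ?_⟩
    have h1 : (I : FractionalIdeal (nonZeroDivisors R) (FractionRing R)) * ↑I⁻¹ = 1 := by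
      rw [← Units.val_mul, mul_inv_cancel, Units.val_one]
    rw [hk] at h1
    have h2 : spanSingleton (nonZeroDivisors R) ((k⁻¹ : (FractionRing R)ˣ) : FractionRing R) *
        (spanSingleton (nonZeroDivisors R) (k : FractionRing R) * ↑I⁻¹) =
        spanSingleton (nonZeroDivisors R) ((k⁻¹ : (FractionRing R)ˣ) : FractionRing R) * 1 := by
      rw [h1]
    rwa [← mul_assoc, spanSingleton_mul_spanSingleton, Units.inv_mul, spanSingleton_one,
      one_mul, mul_one] at h2

/-- The ideal class group of a commutative ring `R`: invertible fractional ideals of `R`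
in its total quotient ring, modulo the principal ones. -/
noncomputable def classGroupOf (R : Type*) [CommRing R] :=
  (FractionalIdeal (nonZeroDivisors R) (FractionRing R))ˣ ⧸ principalUnits R

noncomputable instance (R : Type*) [CommRing R] : CommGroup (classGroupOf R) :=
  QuotientGroup.Quotient.commGroup (principalUnits R)

/-!
Evaluation at `a` and `b` identifies `A[X] ⧸ ((X - a) * (X - b))` with the fiber product of two
copies of `A` over `D = A ⧸ (b - a)`. Over a Noetherian ring, invertible fractional ideals modulo
principal ones form the Picard group, which can be computed inside any faithful extension with
trivial Picard group; for a fiber product `A ×_D B` one takes the extension `A × B`. Mutually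
inverse submodules `I`, `J` of `A × B` contain elements `(a, 1)` and `(c, 1)`; then `u = π a` is a
unit of `D` with inverse `π c`, and `I` must be `{(x, y) | π x = u * ρ y}`. It is principal exactly
when `u` is a product of images of units of `A` and of `B`. For `A = B = ℤ` these images are `±1`.
-/

open nonZeroDivisors CommRing

section PicardGroup

/-- The Picard group of `R`, computed from the invertible submodules of an extension `S` with
trivial Picard group. The group `G` is any presentation of the invertible submodules, and `H` is
its subgroup of principal ones. -/
noncomputable def quotientEquivPicOfUnitsSubmodule {R S G : Type*} [CommRing R] [CommRing S]
    [Algebra R S] [FaithfulSMul R S] [Subsingleton (Pic S)] [CommGroup G] (H : Subgroup G)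
    (e : G ≃* (Submodule R S)ˣ)
    (hH : H.map e.toMonoidHom =
      (Units.map (Submodule.spanSingleton R (A := S)).toMonoidHom).range) :
    G ⧸ H ≃* Pic R :=
  (QuotientGroup.congr _ _ e hH).trans <| (Submodule.unitsQuotEquivRelPic R S).trans <|
    (MulEquiv.subgroupCongr (relPic_eq_top R S)).trans Subgroup.topEquiv

lemma map_principalUnits (R : Type*) [CommRing R] :
    (principalUnits R).map (unitsMulEquivSubmodule (S := R⁰) (P := FractionRing R)).toMonoidHom =
      (Units.map (Submodule.spanSingleton R (A := FractionRing R)).toMonoidHom).range := by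
  ext I
  constructor
  · rintro ⟨J, ⟨k, hk⟩, rfl⟩
    refine ⟨k, Units.ext ?_⟩
    exact (coe_spanSingleton R⁰ _).symm.trans (congrArg coeToSubmodule hk).symm
  · rintro ⟨k, rfl⟩
    obtain ⟨J, hJ⟩ := (unitsMulEquivSubmodule (S := R⁰)).surjective
      (Units.map (Submodule.spanSingleton R (A := FractionRing R)).toMonoidHom k)
    refine ⟨J, ⟨k, coeToSubmodule_injective ?_⟩, hJ⟩
    exact (congrArg Units.val hJ).trans (coe_spanSingleton R⁰ _).symm

/-- The comparison of the class group with the Picard group; the assumption on the total quotient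
ring holds in particular for Noetherian `R`. -/
noncomputable def classGroupOfEquivPic (R : Type*) [CommRing R]
    [Subsingleton (Pic (FractionRing R))] : classGroupOf R ≃* Pic R :=
  quotientEquivPicOfUnitsSubmodule _ unitsMulEquivSubmodule (map_principalUnits R)

instance subsingleton_pic_prod {A B : Type*} [CommRing A] [CommRing B] [Subsingleton (Pic A)]
    [Subsingleton (Pic B)] : Subsingleton (Pic (A × B)) := by
  refine Pic.subsingleton_iff.2 fun M _ _ _ ↦ Module.Invertible.free_iff_linearEquiv.2 ?_
  let _ : Algebra (A × B) A := (RingHom.fst A B).toAlgebra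
  let _ : Algebra (A × B) B := (RingHom.snd A B).toAlgebra
  obtain ⟨eA⟩ := (Module.Invertible.free_iff_linearEquiv (R := A)
    (M := TensorProduct (A × B) A M)).1 inferInstance
  obtain ⟨eB⟩ := (Module.Invertible.free_iff_linearEquiv (R := B)
    (M := TensorProduct (A × B) B M)).1 inferInstance
  have eProd : TensorProduct (A × B) (A × B) M ≃ₗ[A × B] (A × B) :=
    (TensorProduct.prodLeft (A × B) (A × B) A B M).trans <|
      (eA.restrictScalars (A × B)).prodCongr (eB.restrictScalars (A × B))
  exact ⟨(TensorProduct.lid (A × B) M).symm.trans eProd⟩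

/-- Functoriality of the Picard group for ring isomorphisms. -/
noncomputable def picEquivOfRingEquiv {R S : Type*} [CommRing R] [CommRing S] (e : R ≃+* S) :
    Pic R ≃* Pic S :=
  MonoidHom.toMulEquiv (Pic.mapRingHom e.toRingHom) (Pic.mapRingHom e.symm.toRingHom)
    (by rw [Pic.mapRingHom_comp_mapRingHom]; simp [Pic.mapRingHom_id])
    (by rw [Pic.mapRingHom_comp_mapRingHom]; simp [Pic.mapRingHom_id])

end PicardGroup

/-- Since `R` maps onto `D`, the image of `I` in `D` is an ideal, and it contains the image of
`1 ∈ I * J`. -/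
lemma exists_mem_map_eq_one_of_mul_eq_one {R S D : Type*} [CommRing R] [CommRing S] [CommRing D]
    [Algebra R S] (f : S →+* D) (hf : Function.Surjective (f.comp (algebraMap R S)))
    {I J : Submodule R S} (hIJ : I * J = 1) : ∃ i ∈ I, f i = 1 := by
  suffices himage : ∀ z ∈ I * J, ∃ i ∈ I, f i = f z by
    simpa using himage 1 (hIJ ▸ Submodule.one_le.1 le_rfl)
  intro z hz
  induction hz using Submodule.mul_induction_on' with
  | mem_mul_mem i hi j _ =>
    obtain ⟨r, hr⟩ := hf (f j)
    refine ⟨r • i, I.smul_mem r hi, ?_⟩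
    rw [Algebra.smul_def, map_mul, map_mul, mul_comm, ← hr, RingHom.comp_apply]
  | add z _ w _ hz hw =>
    obtain ⟨i, hi, hiz⟩ := hz
    obtain ⟨k, hk, hkw⟩ := hw
    exact ⟨i + k, I.add_mem hi hk, by rw [map_add, map_add, hiz, hkw]⟩

section FiberProduct

variable {A B D : Type*} [CommRing A] [CommRing B] [CommRing D] (π : A →+* D) (ρ : B →+* D)

/-- The fiber product `A ×_D B` of two ring homomorphisms with target `D`, as a subring of
`A × B`. -/
def fiberProduct : Subring (A × B) :=
  (π.comp (RingHom.fst A B)).eqLocus (ρ.comp (RingHom.snd A B))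

instance : FaithfulSMul (fiberProduct π ρ) (A × B) :=
  (faithfulSMul_iff_algebraMap_injective _ _).2 Subtype.val_injective

/-- The `A ×_D B`-submodule of `A × B` obtained by gluing `A` and `B` along multiplication by the
unit `u` of `D`. -/
def gluedSubmodule (u : Dˣ) : Submodule (fiberProduct π ρ) (A × B) where
  carrier := {p | π p.1 = u * ρ p.2}
  zero_mem' := by simp
  add_mem' {p q} (hp : π p.1 = u * ρ p.2) (hq : π q.1 = u * ρ q.2) :=
    show π (p.1 + q.1) = u * ρ (p.2 + q.2) by rw [map_add, map_add, hp, hq, mul_add]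
  smul_mem' r p (hp : π p.1 = u * ρ p.2) :=
    have hr : π r.1.1 = ρ r.1.2 := r.2
    show π (r.1.1 * p.1) = u * ρ (r.1.2 * p.2) by
      rw [map_mul, map_mul, hr, hp, mul_left_comm]

variable {π ρ}

lemma mem_fiberProduct {p : A × B} : p ∈ fiberProduct π ρ ↔ π p.1 = ρ p.2 := Iff.rfl

lemma mem_gluedSubmodule {u : Dˣ} {p : A × B} :
    p ∈ gluedSubmodule π ρ u ↔ π p.1 = u * ρ p.2 := Iff.rfl

lemma mem_one_iff_map_eq {p : A × B} :
    p ∈ (1 : Submodule (fiberProduct π ρ) (A × B)) ↔ π p.1 = ρ p.2 := by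
  rw [Submodule.mem_one]
  exact ⟨fun ⟨r, hr⟩ ↦ hr ▸ r.2, fun hp ↦ ⟨⟨p, hp⟩, rfl⟩⟩

lemma gluedSubmodule_one : gluedSubmodule π ρ 1 = 1 := by
  ext p
  rw [mem_one_iff_map_eq, mem_gluedSubmodule, Units.val_one, one_mul]

lemma gluedSubmodule_mul_le (u v : Dˣ) :
    gluedSubmodule π ρ u * gluedSubmodule π ρ v ≤ gluedSubmodule π ρ (u * v) := by
  refine Submodule.mul_le.2 fun p hp q hq ↦ ?_
  rw [mem_gluedSubmodule] at hp hq ⊢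
  rw [Prod.fst_mul, Prod.snd_mul, map_mul, map_mul, hp, hq, Units.val_mul, mul_mul_mul_comm]

lemma eq_gluedSubmodule_of_mul_eq_one {u : Dˣ} {I J : Submodule (fiberProduct π ρ) (A × B)}
    (hI : I ≤ gluedSubmodule π ρ u) (hJ : J ≤ gluedSubmodule π ρ u⁻¹) (hIJ : I * J = 1) :
    I = gluedSubmodule π ρ u := by
  refine le_antisymm hI ?_
  calc gluedSubmodule π ρ u
    _ = gluedSubmodule π ρ u * J * I := by rw [mul_assoc, mul_comm J, hIJ, mul_one]
    _ ≤ gluedSubmodule π ρ u * gluedSubmodule π ρ u⁻¹ * I := by gcongr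
    _ ≤ gluedSubmodule π ρ (u * u⁻¹) * I := by gcongr; exact gluedSubmodule_mul_le u u⁻¹
    _ = I := by rw [mul_inv_cancel, gluedSubmodule_one, one_mul]

lemma exists_left_mem_gluedSubmodule (hπ : Function.Surjective π) (u : Dˣ) :
    ∃ a, π a = u ∧ (a, 1) ∈ gluedSubmodule π ρ u :=
  (hπ u).imp fun a ha ↦ ⟨ha, by simpa [mem_gluedSubmodule] using ha⟩

lemma gluedSubmodule_mul_inv (hπ : Function.Surjective π) (u : Dˣ) :
    gluedSubmodule π ρ u * gluedSubmodule π ρ u⁻¹ = 1 := by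
  refine le_antisymm ?_ (Submodule.one_le.2 ?_)
  · simpa only [mul_inv_cancel, gluedSubmodule_one] using
      gluedSubmodule_mul_le (π := π) (ρ := ρ) u u⁻¹
  obtain ⟨a, ha, -⟩ := exists_left_mem_gluedSubmodule (ρ := ρ) hπ u
  obtain ⟨c, hc, hc_mem⟩ := exists_left_mem_gluedSubmodule (ρ := ρ) hπ u⁻¹
  -- `k = 1 - a * c` lies in the kernel of `π`, and `a * (1 + k) * c + k * k = 1`.
  have hk : π (1 - a * c) = 0 := by rw [map_sub, map_mul, ha, hc, Units.mul_inv, map_one, sub_self]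
  have hk_mem (v : Dˣ) : (1 - a * c, 0) ∈ gluedSubmodule π ρ v := by simp [mem_gluedSubmodule, hk]
  have ha_mem : (a * (1 + (1 - a * c)), 1) ∈ gluedSubmodule π ρ u := by
    rw [mem_gluedSubmodule, map_mul, map_add, hk, ha, map_one, map_one, add_zero]
  have hone : (1 : A × B) = (a * (1 + (1 - a * c)), 1) * (c, 1) +
      (1 - a * c, 0) * (1 - a * c, 0) :=
    Prod.ext (show 1 = a * (1 + (1 - a * c)) * c + (1 - a * c) * (1 - a * c) by ring)
      (show 1 = 1 * 1 + 0 * 0 by ring)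
  exact hone ▸ add_mem (Submodule.mul_mem_mul ha_mem hc_mem)
    (Submodule.mul_mem_mul (hk_mem u) (hk_mem u⁻¹))

lemma gluedSubmodule_mul (hπ : Function.Surjective π) (u v : Dˣ) :
    gluedSubmodule π ρ (u * v) = gluedSubmodule π ρ u * gluedSubmodule π ρ v := by
  refine (eq_gluedSubmodule_of_mul_eq_one (gluedSubmodule_mul_le u v)
    (J := gluedSubmodule π ρ u⁻¹ * gluedSubmodule π ρ v⁻¹) ?_ ?_).symm
  · rw [mul_inv]
    exact gluedSubmodule_mul_le u⁻¹ v⁻¹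
  · rw [mul_mul_mul_comm, gluedSubmodule_mul_inv hπ, gluedSubmodule_mul_inv hπ, one_mul]

lemma gluedSubmodule_injective (hπ : Function.Surjective π) :
    Function.Injective (gluedSubmodule π ρ) := fun u v huv ↦ by
  obtain ⟨a, hu, ha⟩ := exists_left_mem_gluedSubmodule (ρ := ρ) hπ u
  have hv : π a = v := by simpa [mem_gluedSubmodule] using huv.le ha
  exact Units.ext (hu.symm.trans hv)

lemma exists_left_mem_of_mul_eq_one (hπ : Function.Surjective π)
    {I J : Submodule (fiberProduct π ρ) (A × B)} (hIJ : I * J = 1) : ∃ a, (a, 1) ∈ I := by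
  obtain ⟨⟨a, b⟩, hab, rfl : b = 1⟩ := exists_mem_map_eq_one_of_mul_eq_one (RingHom.snd A B)
    (fun y ↦ (hπ (ρ y)).elim fun x hx ↦ ⟨⟨(x, y), hx⟩, rfl⟩) hIJ
  exact ⟨a, hab⟩

lemma exists_eq_gluedSubmodule_of_mul_eq_one (hπ : Function.Surjective π)
    {I J : Submodule (fiberProduct π ρ) (A × B)} (hIJ : I * J = 1) :
    ∃ u, gluedSubmodule π ρ u = I := by
  obtain ⟨a, ha⟩ := exists_left_mem_of_mul_eq_one hπ hIJ
  obtain ⟨c, hc⟩ := exists_left_mem_of_mul_eq_one hπ (mul_comm I J ▸ hIJ)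
  have hmul {p q : A × B} (hp : p ∈ I) (hq : q ∈ J) : π p.1 * π q.1 = ρ p.2 * ρ q.2 := by
    simpa only [Prod.fst_mul, Prod.snd_mul, map_mul] using
      mem_one_iff_map_eq.1 (hIJ.le (Submodule.mul_mem_mul hp hq))
  have hac : π a * π c = 1 := by simpa using hmul ha hc
  let u : Dˣ := ⟨π a, π c, hac, by rw [mul_comm, hac]⟩
  have hI : I ≤ gluedSubmodule π ρ u := fun p hp ↦ by
    have hpc : π p.1 * π c = ρ p.2 := by simpa using hmul hp hc
    rw [mem_gluedSubmodule, ← hpc, mul_left_comm, hac, mul_one]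
  have hJ : J ≤ gluedSubmodule π ρ u⁻¹ := fun q hq ↦ by
    have haq : π a * π q.1 = ρ q.2 := by simpa using hmul ha hq
    rw [mem_gluedSubmodule, ← haq]
    exact (u.inv_mul_cancel_left _).symm
  exact ⟨u, (eq_gluedSubmodule_of_mul_eq_one hI hJ hIJ).symm⟩

/-- The parametrization of the invertible `A ×_D B`-submodules of `A × B` by their gluing units. -/
noncomputable def gluedSubmoduleEquiv (hπ : Function.Surjective π) :
    Dˣ ≃* (Submodule (fiberProduct π ρ) (A × B))ˣ :=
  MulEquiv.ofBijective
    (MonoidHom.toHomUnits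
      { toFun := gluedSubmodule π ρ
        map_one' := gluedSubmodule_one
        map_mul' := gluedSubmodule_mul hπ })
    ⟨fun _ _ huv ↦ gluedSubmodule_injective hπ (congrArg Units.val huv), fun I ↦
      (exists_eq_gluedSubmodule_of_mul_eq_one hπ I.mul_inv).imp fun _ hu ↦ Units.ext hu⟩

lemma span_singleton_le_gluedSubmodule (x : Aˣ) (y : Bˣ) :
    Submodule.span (fiberProduct π ρ) {((x : A), (y : B))} ≤
      gluedSubmodule π ρ (Units.map π x * (Units.map ρ y)⁻¹) := by
  rw [Submodule.span_singleton_le_iff_mem, mem_gluedSubmodule]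
  simp [mul_assoc, ← map_mul]

lemma span_singleton_eq_gluedSubmodule (x : Aˣ) (y : Bˣ) :
    Submodule.span (fiberProduct π ρ) {((x : A), (y : B))} =
      gluedSubmodule π ρ (Units.map π x * (Units.map ρ y)⁻¹) := by
  refine eq_gluedSubmodule_of_mul_eq_one (span_singleton_le_gluedSubmodule x y)
    (J := Submodule.span _ {((↑x⁻¹ : A), (↑y⁻¹ : B))}) ?_ ?_
  · simpa only [map_inv, mul_inv] using span_singleton_le_gluedSubmodule (π := π) (ρ := ρ) x⁻¹ y⁻¹
  · rw [Submodule.span_mul_span, Set.singleton_mul_singleton, Prod.mk_mul_mk, Units.mul_inv,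
      Units.mul_inv, Submodule.one_eq_span, Prod.one_eq_mk]

lemma map_gluedSubmoduleEquiv (hπ : Function.Surjective π) :
    ((Units.map (π : A →* D)).range ⊔ (Units.map (ρ : B →* D)).range).map
      (gluedSubmoduleEquiv hπ).toMonoidHom =
      (Units.map (Submodule.spanSingleton (fiberProduct π ρ) (A := A × B)).toMonoidHom).range := by
  ext I
  simp only [Subgroup.mem_map, MonoidHom.mem_range]
  constructor
  · rintro ⟨u, hu, rfl⟩
    obtain ⟨_, ⟨x, rfl⟩, _, ⟨y, rfl⟩, rfl⟩ := Subgroup.mem_sup.1 hu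
    refine ⟨MulEquiv.prodUnits.symm (x, y⁻¹), Units.ext ?_⟩
    have hspan := span_singleton_eq_gluedSubmodule (π := π) (ρ := ρ) x y⁻¹
    rwa [map_inv, inv_inv] at hspan
  · rintro ⟨z, rfl⟩
    obtain ⟨⟨x, y⟩, rfl⟩ := MulEquiv.prodUnits.symm.surjective z
    exact ⟨_, mul_mem (Subgroup.mem_sup_left ⟨x, rfl⟩) (inv_mem (Subgroup.mem_sup_right ⟨y, rfl⟩)),
      Units.ext (span_singleton_eq_gluedSubmodule (π := π) (ρ := ρ) x y).symm⟩

/-- Milnor's description of the Picard group of a fiber product, in the case where `A` and `B` have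
trivial Picard groups. -/
noncomputable def picFiberProductEquiv [Subsingleton (Pic A)] [Subsingleton (Pic B)]
    (hπ : Function.Surjective π) :
    Pic (fiberProduct π ρ) ≃*
      Dˣ ⧸ ((Units.map (π : A →* D)).range ⊔ (Units.map (ρ : B →* D)).range) :=
  (quotientEquivPicOfUnitsSubmodule _ (gluedSubmoduleEquiv (ρ := ρ) hπ)
    (map_gluedSubmoduleEquiv hπ)).symm

end FiberProduct

section Polynomial

variable {A D : Type*} [CommRing A] [CommRing D] {a b : A} {π : A →+* D}

lemma ker_evalRingHom_prod (hab : b - a ∈ A⁰) :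
    RingHom.ker ((evalRingHom a).prod (evalRingHom b)) = Ideal.span {(X - C a) * (X - C b)} := by
  ext q
  rw [RingHom.mem_ker, Ideal.mem_span_singleton, RingHom.prod_apply, Prod.mk_eq_zero,
    coe_evalRingHom, coe_evalRingHom]
  constructor
  · rintro ⟨ha, hb⟩
    obtain ⟨s, rfl⟩ := dvd_iff_isRoot.2 ha
    rw [eval_mul, eval_sub, eval_X, eval_C] at hb
    exact mul_dvd_mul_left _ (dvd_iff_isRoot.2 ((mem_nonZeroDivisors_iff.1 hab).1 _ hb))
  · rintro ⟨s, rfl⟩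
    simp

lemma range_evalRingHom_prod (hker : RingHom.ker π = Ideal.span {b - a}) :
    ((evalRingHom a).prod (evalRingHom b)).range = fiberProduct π π := by
  have mem_iff (x y : A) : (x, y) ∈ fiberProduct π π ↔ b - a ∣ y - x := by
    rw [mem_fiberProduct, ← Ideal.mem_span_singleton, ← hker, RingHom.sub_mem_ker_iff, eq_comm]
  ext ⟨x, y⟩
  rw [mem_iff]
  constructor
  · rintro ⟨q, hq⟩
    obtain ⟨rfl, rfl⟩ := Prod.mk.inj hq
    exact sub_dvd_eval_sub b a q
  · rintro ⟨k, hk⟩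
    have hy : x + k * (b - a) = y := by rw [mul_comm, ← hk, add_sub_cancel]
    exact ⟨C x + C k * (X - C a), by simp [hy]⟩

/-- The Milnor square of `A[X] ⧸ ((X - a) * (X - b))`: both projections are evaluations, at `a` and
at `b`, and the base `D` is `A ⧸ (b - a)`, presented by a homomorphism `π` with the right kernel. -/
noncomputable def quotientEquivFiberProduct (hab : b - a ∈ A⁰)
    (hker : RingHom.ker π = Ideal.span {b - a}) :
    A[X] ⧸ Ideal.span {(X - C a) * (X - C b)} ≃+* fiberProduct π π :=
  (Ideal.quotEquivOfEq (ker_evalRingHom_prod hab).symm).trans <|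
    (RingHom.quotientKerEquivRange _).trans (RingEquiv.subringCongr (range_evalRingHom_prod hker))

end Polynomial

lemma range_unitsMap_intCastRingHom (n : ℕ) :
    (Units.map (Int.castRingHom (ZMod n) : ℤ →* ZMod n)).range = Subgroup.zpowers (-1) := by
  have htop : (⊤ : Subgroup ℤˣ) = Subgroup.zpowers (-1) := by
    refine (top_unique fun u _ ↦ ?_).symm
    rcases Int.units_eq_one_or u with rfl | rfl
    exacts [one_mem _, Subgroup.mem_zpowers _]
  have hneg : Units.map (Int.castRingHom (ZMod n) : ℤ →* ZMod n) (-1) = -1 := Units.ext (by simp)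
  rw [MonoidHom.range_eq_map, htop, MonoidHom.map_zpowers, hneg]

lemma card_units_zmod_quotient_zpowers_neg_one {n : ℕ} (hn : 2 < n) :
    Nat.card ((ZMod n)ˣ ⧸ Subgroup.zpowers (-1 : (ZMod n)ˣ)) = n.totient / 2 := by
  have : NeZero n := ⟨by lia⟩
  have : Fact (1 < n) := ⟨by lia⟩
  have hcard : Nat.card (Subgroup.zpowers (-1 : (ZMod n)ˣ)) = 2 := by
    rw [Nat.card_zpowers, ← orderOf_units, Units.coe_neg_one, orderOf_neg_one,
      ringChar.eq (ZMod n) n, if_neg hn.ne']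
  rw [← ZMod.card_units_eq_totient n, ← Nat.card_eq_fintype_card,
    ← Subgroup.index_mul_card (Subgroup.zpowers (-1 : (ZMod n)ˣ)), hcard,
    Nat.mul_div_cancel _ two_pos, Subgroup.index_eq_card]

theorem stmt_17_general {A D : Type*} [CommRing A] [IsNoetherianRing A] [Subsingleton (Pic A)]
    [CommRing D] {a b : A} (hab : b - a ∈ A⁰) {π : A →+* D} (hπ : Function.Surjective π)
    (hker : RingHom.ker π = Ideal.span {b - a}) :
    Nonempty (classGroupOf (A[X] ⧸ Ideal.span {(X - C a) * (X - C b)}) ≃*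
      Dˣ ⧸ (Units.map (π : A →* D)).range) :=
  ⟨(classGroupOfEquivPic _).trans <|
    (picEquivOfRingEquiv (quotientEquivFiberProduct hab hker)).trans <|
      (picFiberProductEquiv hπ).trans (QuotientGroup.quotientMulEquivOfEq (sup_idem _))⟩

/-- For integers `a < b` with `b - a > 2` and `R = ℤ[x]/((x-a)(x-b))`, the ideal class
group `Cl(R)` is isomorphic to `(ℤ/(b-a))ˣ / {±1}`; in particular `|Cl(R)| = φ(b-a)/2`. -/
theorem stmt_17 (a b : ℤ) (hab : a < b) (h2 : b - a > 2) :
    Nonempty (classGroupOf (ℤ[X] ⧸ Ideal.span {(X - C a) * (X - C b)}) ≃*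
      ((ZMod (b - a).toNat)ˣ ⧸ Subgroup.zpowers (-1 : (ZMod (b - a).toNat)ˣ))) ∧
    Nat.card (classGroupOf (ℤ[X] ⧸ Ideal.span {(X - C a) * (X - C b)})) =
      (b - a).toNat.totient / 2 := by
  have hker : RingHom.ker (Int.castRingHom (ZMod (b - a).toNat)) = Ideal.span {b - a} := by
    rw [ZMod.ker_intCastRingHom, Int.toNat_of_nonneg (by lia)]
  obtain ⟨φ⟩ := range_unitsMap_intCastRingHom (b - a).toNat ▸ stmt_17_general
    (mem_nonZeroDivisors_of_ne_zero (by lia)) ZMod.intCast_surjective hker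
  exact ⟨⟨φ⟩, (Nat.card_congr φ.toEquiv).trans (card_units_zmod_quotient_zpowers_neg_one (by lia))⟩
end

section
/- Let a < b < c be integers with c − a ≥ 4 and gcd(b−a, c−b, c−a) = 1, and let R = ℤ[x]/((x−a)(x−b)(x−c)). Then Cl(R) is isomorphic to the quotient of (ℤ/(b−a))^× × (ℤ/(c−b))^× × (ℤ/(c−a))^× by the order-4 subgroup {(1,1,1), (1,−1,−1), (−1,1,−1), (−1,−1,1)}. -/
open Polynomial FractionalIdeal

/-!
Evaluation at the roots identifies `ℤ[x]/((x-a)(x-b)(x-c))` with the order in `ℤ³` cut out by the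
congruences between pairs of coordinates modulo the differences of the roots, and these differences
are pairwise coprime. View the congruences as a graph: one edge, with a modulus, for each pair of
coordinates. Prescribing a unit ratio on each edge, in place of the ratio `1`, gives a lattice, and
by the Chinese remainder theorem these lattices are invertible ideals multiplying like the ratios.
Conversely, every coordinate of an invertible ideal generates a principal `ℤ`-submodule of `ℚ`, so
that after scaling both the ideal and its inverse attain the value `1` in each coordinate; products
of such elements lie in the order, which forces the ideal to be one of the twisted lattices. A
twisted lattice is principal exactly when its ratios come from signs `±1` at the vertices.
-/

section FractionRing

open scoped nonZeroDivisors

lemma isFractionRing_of_forall_exists_zsmul_mem_range {R K : Type*} [CommRing R] [CommRing K]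
    [Algebra R K] [FaithfulSMul R K] [Algebra ℚ K] [IsArtinianRing K]
    (h : ∀ x : K, ∃ n : ℤ, n ≠ 0 ∧ n • x ∈ (algebraMap R K).range) : IsFractionRing R K := by
  have hinj := FaithfulSMul.algebraMap_injective R K
  have hunit {n : ℤ} (hn : n ≠ 0) : IsUnit (n : K) := by
    simpa using (Int.cast_ne_zero (α := ℚ).mpr hn).isUnit.map (algebraMap ℚ K)
  rw [IsFractionRing, isLocalization_iff]
  refine ⟨fun y => IsArtinianRing.isUnit_of_mem_nonZeroDivisors <|
    mem_nonZeroDivisors_iff_right.mpr fun x hx => ?_, fun x => ?_,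
    fun hxy => ⟨1, by rw [hinj hxy]⟩⟩
  · obtain ⟨n, hn, r, hr⟩ := h x
    rw [zsmul_eq_mul] at hr
    have hr0 : r = 0 := mem_nonZeroDivisors_iff_right.mp y.2 r <| hinj <| by
      rw [map_mul, hr, mul_assoc, hx, mul_zero, map_zero]
    rw [hr0, map_zero] at hr
    exact (hunit hn).mul_right_eq_zero.mp hr.symm
  · obtain ⟨n, hn, r, hr⟩ := h x
    have hn' : (n : R) ∈ R⁰ := mem_nonZeroDivisors_of_injective hinj <| by
      rw [map_intCast]
      exact (hunit hn).mem_nonZeroDivisors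
    exact ⟨(r, ⟨n, hn'⟩), by rw [map_intCast, hr, zsmul_eq_mul, mul_comm]⟩

end FractionRing

section FractionalIdeal

open scoped nonZeroDivisors

section Principal

variable {R K : Type*} [CommRing R] [CommRing K] [Algebra R K]

/-- The principal fractional ideal generated by a unit of `K`, which need not be a field. -/
noncomputable def principalFractionalIdeal (S : Submonoid R) [IsLocalization S K] :
    Kˣ →* (FractionalIdeal S K)ˣ :=
  Units.map
    { toFun := spanSingleton S
      map_one' := spanSingleton_one
      map_mul' := fun x y => (spanSingleton_mul_spanSingleton x y).symm }

lemma principalFractionalIdeal_eq_iff {S : Submonoid R} [IsLocalization S K] {k : Kˣ}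
    {I : (FractionalIdeal S K)ˣ} :
    principalFractionalIdeal S k = I ↔
      (k : K) ∈ (I : FractionalIdeal S K) ∧ ((k⁻¹ : Kˣ) : K) ∈ (↑I⁻¹ : FractionalIdeal S K) := by
  constructor
  · rintro rfl
    rw [← map_inv]
    exact ⟨mem_spanSingleton_self _ _, mem_spanSingleton_self _ _⟩
  · rintro ⟨hk, hk'⟩
    have hle : ∀ {l : Kˣ} {J : (FractionalIdeal S K)ˣ}, (l : K) ∈ (J : FractionalIdeal S K) →
        (principalFractionalIdeal S l : FractionalIdeal S K) ≤ J :=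
      fun h => spanSingleton_le_iff_mem.mpr h
    refine Units.ext (le_antisymm (hle hk) ?_)
    calc (I : FractionalIdeal S K)
        = I * principalFractionalIdeal S k⁻¹ * principalFractionalIdeal S k := by
          rw [mul_assoc, ← Units.val_mul, ← map_mul, inv_mul_cancel, map_one, Units.val_one,
            mul_one]
      _ ≤ I * ↑I⁻¹ * principalFractionalIdeal S k := by
          gcongr
          exact hle hk'
      _ = principalFractionalIdeal S k := by rw [Units.mul_inv, one_mul]

variable [IsFractionRing R K]

/-- The class of an invertible fractional ideal, where the total quotient ring of `R` may be any
model `K`. -/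
noncomputable def fractionalIdealClass : (FractionalIdeal R⁰ K)ˣ →* classGroupOf R :=
  (QuotientGroup.mk' (principalUnits R)).comp
    (Units.mapEquiv (canonicalEquiv R⁰ K (FractionRing R)).toMulEquiv).toMonoidHom

lemma fractionalIdealClass_surjective :
    Function.Surjective (fractionalIdealClass (R := R) (K := K)) :=
  (QuotientGroup.mk'_surjective _).comp (MulEquiv.surjective _)

lemma fractionalIdealClass_eq_one_iff {I : (FractionalIdeal R⁰ K)ˣ} :
    fractionalIdealClass I = 1 ↔ ∃ k, principalFractionalIdeal R⁰ k = I := by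
  let φ := canonicalEquiv R⁰ K (FractionRing R)
  let ψ : K ≃ₐ[R] FractionRing R := IsLocalization.algEquiv R⁰ K (FractionRing R)
  have hspan (k : Kˣ) : φ (principalFractionalIdeal R⁰ k) =
      spanSingleton R⁰ (Units.mapEquiv ψ.toMulEquiv k : FractionRing R) :=
    canonicalEquiv_spanSingleton (k : K)
  have hclass : fractionalIdealClass I = 1 ↔
      ∃ k : (FractionRing R)ˣ, φ I = spanSingleton R⁰ (k : FractionRing R) :=
    QuotientGroup.eq_one_iff _
  rw [hclass, (Units.mapEquiv ψ.toMulEquiv).surjective.exists]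
  simp only [← hspan, φ.injective.eq_iff, Units.val_inj, eq_comm]

end Principal

section Coordinate

variable {R K : Type*} [CommRing R] [CommRing K] [Algebra R K] {S : Submonoid R}
  [IsLocalization S K] {π : K →+* ℚ}

lemma exists_mem_forall_map_eq_intCast_mul
    (hπ : ∀ r, π (algebraMap R K r) ∈ (Int.castRingHom ℚ).range) (I : FractionalIdeal S K) :
    ∃ x ∈ I, ∀ z ∈ I, ∃ n : ℤ, π z = n * π x := by
  obtain ⟨d, hdS, hd⟩ := I.isFractional
  obtain ⟨m, hm⟩ := hπ d
  have hm0 : m ≠ 0 := by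
    rintro rfl
    exact ((IsLocalization.map_units K (⟨d, hdS⟩ : S)).map π).ne_zero (by simp [← hm])
  let M : Submodule ℤ ℚ :=
    AddSubgroup.toIntSubmodule ((I : Submodule R K).toAddSubgroup.map π.toAddMonoidHom)
  have hM : IsFractional ℤ⁰ M := by
    refine ⟨m, mem_nonZeroDivisors_of_ne_zero hm0, ?_⟩
    rintro _ ⟨x, hx, rfl⟩
    obtain ⟨r, hr⟩ := hd x hx
    obtain ⟨n, hn⟩ := hπ r
    refine ⟨n, ?_⟩
    rw [hr, Algebra.smul_def, map_mul, ← hm] at hn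
    simpa using hn
  obtain ⟨q, hq⟩ := (FractionalIdeal.isPrincipal (⟨M, hM⟩ : FractionalIdeal ℤ⁰ ℚ)).principal
  have hqM : M = Submodule.span ℤ {q} := hq
  obtain ⟨x, hx, rfl⟩ : q ∈ M := hqM ▸ Submodule.mem_span_singleton_self q
  refine ⟨x, hx, fun z hz => ?_⟩
  have hz' : π z ∈ M := ⟨z, hz, rfl⟩
  rw [hqM] at hz'
  obtain ⟨n, hn⟩ := Submodule.mem_span_singleton.mp hz'
  exact ⟨n, by simpa using hn.symm⟩

lemma exists_mem_mem_inv_map_mul_eq_one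
    (hπ : ∀ r, π (algebraMap R K r) ∈ (Int.castRingHom ℚ).range) (I : (FractionalIdeal S K)ˣ) :
    ∃ x ∈ (I : FractionalIdeal S K), ∃ y ∈ (↑I⁻¹ : FractionalIdeal S K), π x * π y = 1 := by
  obtain ⟨x, hx, hgen⟩ := exists_mem_forall_map_eq_intCast_mul hπ (I : FractionalIdeal S K)
  have hdvd : ∀ z ∈ (I * ↑I⁻¹ : FractionalIdeal S K),
      ∃ y ∈ (↑I⁻¹ : FractionalIdeal S K), π z = π x * π y := by
    intro z hz
    refine FractionalIdeal.mul_induction_on hz (fun i hi j hj => ?_) ?_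
    · obtain ⟨n, hn⟩ := hgen i hi
      refine ⟨n • j, zsmul_mem (S := Submodule R K) hj n, ?_⟩
      rw [map_mul, hn, map_zsmul, zsmul_eq_mul]
      ring
    · rintro z w ⟨y, hy, hzy⟩ ⟨y', hy', hwy⟩
      exact ⟨y + y', Submodule.add_mem _ hy hy', by rw [map_add, map_add, hzy, hwy, mul_add]⟩
  obtain ⟨y, hy, h⟩ := hdvd 1 (I.mul_inv ▸ one_mem_one S)
  exact ⟨x, hx, y, hy, by rw [← h, map_one]⟩

end Coordinate

end FractionalIdeal

/-- The inclusion of the integral vectors in the rational ones. -/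
def integralVector (ι : Type*) : (ι → ℤ) →+* (ι → ℚ) := (Int.castRingHom ℚ).compLeft ι

lemma integralVector_apply {ι : Type*} (u : ι → ℤ) (i : ι) : integralVector ι u i = u i := rfl

lemma integralVector_injective (ι : Type*) : Function.Injective (integralVector ι) :=
  Int.cast_injective.comp_left

/-- A graph with vertices `ι`, whose edges `E` carry pairwise coprime nonzero moduli. It
records the congruences `u (src e) ≡ u (tgt e)` modulo `modulus e` that cut out an order in
`ι → ℤ`; the orientation of an edge only serves to name its two ends. -/
structure CongruenceGraph (ι E : Type*) where
  src : E → ι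
  tgt : E → ι
  modulus : E → ℕ
  src_ne_tgt : ∀ e, src e ≠ tgt e
  modulus_ne_zero : ∀ e, modulus e ≠ 0
  coprime_modulus : Pairwise (Function.onFun Nat.Coprime modulus)

namespace CongruenceGraph

open scoped nonZeroDivisors

section Lattice

variable {ι E : Type*} (Γ : CongruenceGraph ι E)

/-- The group of twists of `Γ`: a residue unit on every edge. -/
abbrev Twist : Type _ := ∀ e, (ZMod (Γ.modulus e))ˣ

/-- The integral vectors whose two coordinates at every edge `e` have ratio `g e`. For `g = 1` this
is the order defined by `Γ`. -/
def lattice (g : Γ.Twist) : AddSubgroup (ι → ℤ) where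
  carrier := {u | ∀ e, (u (Γ.tgt e) : ZMod (Γ.modulus e)) = g e * u (Γ.src e)}
  zero_mem' := by simp
  add_mem' := by
    intro u v hu hv e
    simp only [Pi.add_apply, Int.cast_add, hu e, hv e, mul_add]
  neg_mem' := by
    intro u hu e
    simp only [Pi.neg_apply, Int.cast_neg, hu e, mul_neg]

variable {Γ} {g h : Γ.Twist} {u v : ι → ℤ}

lemma mem_lattice :
    u ∈ Γ.lattice g ↔ ∀ e, (u (Γ.tgt e) : ZMod (Γ.modulus e)) = g e * u (Γ.src e) := Iff.rfl

lemma mul_mem_lattice (hu : u ∈ Γ.lattice g) (hv : v ∈ Γ.lattice h) :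
    u * v ∈ Γ.lattice (g * h) := by
  intro e
  simp only [Pi.mul_apply, Int.cast_mul, Units.val_mul, hu e, hv e]
  ring

lemma mem_lattice_of_intCast_eq_zero (hu : ∀ e i, (u i : ZMod (Γ.modulus e)) = 0) :
    u ∈ Γ.lattice g := by
  simp [mem_lattice, hu]

lemma exists_ratio_eq (g : Γ.Twist) :
    ∃ c : ι → Γ.Twist, ∀ e, c (Γ.tgt e) e = g e * c (Γ.src e) e := by
  classical
  exact ⟨fun i e => if i = Γ.tgt e then g e else 1, fun e => by simp [Γ.src_ne_tgt e]⟩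

section Finite

variable [Finite E]

variable (Γ) in
lemma exists_intCast_eq (c : ∀ e, ZMod (Γ.modulus e)) :
    ∃ n : ℤ, ∀ e, (n : ZMod (Γ.modulus e)) = c e := by
  have := Fintype.ofFinite E
  let φ := ZMod.prodEquivPi Γ.modulus Γ.coprime_modulus
  obtain ⟨n, hn⟩ := ZMod.intCast_surjective (φ.symm c)
  refine ⟨n, fun e => ?_⟩
  rw [← Pi.intCast_apply (π := fun e => ZMod (Γ.modulus e)), ← map_intCast φ, hn,
    φ.apply_symm_apply]

/-- Lift unit coordinates of residue ratio `g` to a vector `u`, and their inverses to `v`. -/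
lemma exists_mem_lattice_mul_eq_one_add (g : Γ.Twist) :
    ∃ u ∈ Γ.lattice g, ∃ v ∈ Γ.lattice g⁻¹, ∃ w, u * v = 1 + w ∧
      ∀ e i, (w i : ZMod (Γ.modulus e)) = 0 := by
  obtain ⟨c, hc⟩ := exists_ratio_eq g
  choose u hu using fun i => Γ.exists_intCast_eq fun e => ↑(c i e)
  choose v hv using fun i => Γ.exists_intCast_eq fun e => ↑(c i e)⁻¹
  refine ⟨u, fun e => ?_, v, fun e => ?_, u * v - 1, by ring, fun e i => ?_⟩
  · rw [hu, hu, hc, Units.val_mul]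
  · rw [hv, hv, hc, mul_inv, Units.val_mul, Pi.inv_apply]
  · simp [hu, hv]

variable (Γ) in
lemma exists_ne_zero_forall_intCast_eq_zero :
    ∃ n : ℤ, n ≠ 0 ∧ ∀ e, (n : ZMod (Γ.modulus e)) = 0 := by
  have := Fintype.ofFinite E
  exact ⟨∏ e, (Γ.modulus e : ℤ), Finset.prod_ne_zero_iff.mpr fun e _ =>
    Int.natCast_ne_zero.mpr (Γ.modulus_ne_zero e), fun e =>
    (ZMod.intCast_zmod_eq_zero_iff_dvd _ _).mpr (Finset.dvd_prod_of_mem _ (Finset.mem_univ e))⟩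

end Finite

end Lattice

section Order

variable {ι E : Type*} (Γ : CongruenceGraph ι E)

/-- The image of `R` in `ι → ℚ` is the order of integral vectors whose coordinates satisfy the
congruences of `Γ`. -/
def IsOrder (R : Type*) [CommRing R] [Algebra R (ι → ℚ)] : Prop :=
  ∀ x, x ∈ (algebraMap R (ι → ℚ)).range ↔ ∃ u ∈ Γ.lattice 1, integralVector ι u = x

/-- The ratios along the edges of the signs at the vertices. -/
def signTwist : (ι → ℤˣ) →* Γ.Twist :=
  let residue (e : E) (i : ι) : (ι → ℤˣ) →* (ZMod (Γ.modulus e))ˣ :=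
    (Units.map (Int.castRingHom _).toMonoidHom).comp (Pi.evalMonoidHom _ i)
  MonoidHom.pi fun e => residue e (Γ.tgt e) / residue e (Γ.src e)

lemma signTwist_apply (ε : ι → ℤˣ) (e : E) :
    Γ.signTwist ε e = Units.map (Int.castRingHom (ZMod (Γ.modulus e))).toMonoidHom
      (ε (Γ.tgt e) / ε (Γ.src e)) := by
  rw [_root_.map_div]
  rfl

variable {Γ}

lemma signTwist_eq_iff {g : Γ.Twist} {ε : ι → ℤˣ} :
    Γ.signTwist ε = g ↔ (fun i => (ε i : ℤ)) ∈ Γ.lattice g := by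
  rw [mem_lattice, funext_iff]
  refine forall_congr' fun e => ?_
  rw [signTwist_apply, _root_.map_div, div_eq_iff_eq_mul, Units.ext_iff]
  rfl

/-- An invertible fractional ideal that, together with its inverse, meets the hyperplane `x i = 1`
for every coordinate `i`. Such an ideal is shown to be one of the twisted lattices of `Γ`. -/
def IsNormalized {R : Type*} [CommRing R] [Algebra R (ι → ℚ)]
    (I : (FractionalIdeal R⁰ (ι → ℚ))ˣ) : Prop :=
  ∀ i, (∃ x ∈ (I : FractionalIdeal R⁰ (ι → ℚ)), x i = 1) ∧
    ∃ y ∈ (↑I⁻¹ : FractionalIdeal R⁰ (ι → ℚ)), y i = 1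

lemma IsNormalized.inv {R : Type*} [CommRing R] [Algebra R (ι → ℚ)]
    {I : (FractionalIdeal R⁰ (ι → ℚ))ˣ} (hI : IsNormalized I) : IsNormalized I⁻¹ :=
  fun i => ⟨(hI i).2, by simpa only [inv_inv] using (hI i).1⟩

end Order

namespace IsOrder

variable {ι E : Type*} {Γ : CongruenceGraph ι E} {R : Type*} [CommRing R] [Algebra R (ι → ℚ)]
  (hR : Γ.IsOrder R)

include hR

lemma map_algebraMap_mem_range_intCast (i : ι) (r : R) :
    Pi.evalRingHom (fun _ => ℚ) i (algebraMap R (ι → ℚ) r) ∈ (Int.castRingHom ℚ).range := by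
  obtain ⟨u, -, hu⟩ := (hR _).mp ⟨r, rfl⟩
  exact ⟨u i, congrFun hu i⟩

lemma mem_one_iff {x : ι → ℚ} :
    x ∈ (1 : FractionalIdeal R⁰ (ι → ℚ)) ↔ ∃ u ∈ Γ.lattice 1, integralVector ι u = x := by
  rw [FractionalIdeal.mem_one_iff, ← hR, RingHom.mem_range]

lemma exists_isNormalized_principal_mul [IsFractionRing R (ι → ℚ)]
    (I : (FractionalIdeal R⁰ (ι → ℚ))ˣ) :
    ∃ k, IsNormalized (principalFractionalIdeal R⁰ k * I) := by
  choose x hx y hy hxy using fun i =>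
    exists_mem_mem_inv_map_mul_eq_one (hR.map_algebraMap_mem_range_intCast i) I
  have hyx : (fun i => y i i) * (fun i => x i i) = (1 : ι → ℚ) := by
    ext i
    rw [Pi.mul_apply, mul_comm]
    exact hxy i
  refine ⟨Units.mkOfMulEqOne _ _ hyx, fun i => ⟨⟨(fun i => y i i) * x i, ?_, ?_⟩,
    ⟨(fun i => x i i) * y i, ?_, ?_⟩⟩⟩
  · exact FractionalIdeal.mul_mem_mul (mem_spanSingleton_self _ _) (hx i)
  · exact congrFun hyx i
  · rw [mul_inv, ← map_inv]
    exact FractionalIdeal.mul_mem_mul (mem_spanSingleton_self _ _) (hy i)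
  · exact hxy i

variable {I : (FractionalIdeal R⁰ (ι → ℚ))ˣ}

lemma exists_integralVector_eq (hI : IsNormalized I) {z : ι → ℚ}
    (hz : z ∈ (I : FractionalIdeal R⁰ (ι → ℚ))) : ∃ u, integralVector ι u = z := by
  choose u hu using fun i => show ∃ n : ℤ, (n : ℚ) = z i from by
    obtain ⟨y, hy, hyi⟩ := (hI i).2
    obtain ⟨u, -, hu⟩ := hR.mem_one_iff.mp (I.mul_inv ▸ FractionalIdeal.mul_mem_mul hz hy)
    exact ⟨u i, by simpa [integralVector_apply, hyi] using congrFun hu i⟩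
  exact ⟨u, funext hu⟩

/-- If `x ∈ I` and `y ∈ I⁻¹` have coordinate `1` at the vertex `i`, then the integrality of
products shows that the ratio on an edge from `i` to `j` is `x j`, with inverse `y j`. -/
lemma exists_twist_forall_mem_lattice (hI : IsNormalized I) :
    ∃ g : Γ.Twist,
      (∀ u, integralVector ι u ∈ (I : FractionalIdeal R⁰ (ι → ℚ)) → u ∈ Γ.lattice g) ∧
      ∀ v, integralVector ι v ∈ (↑I⁻¹ : FractionalIdeal R⁰ (ι → ℚ)) → v ∈ Γ.lattice g⁻¹ := by
  have hunit {J : (FractionalIdeal R⁰ (ι → ℚ))ˣ} (hJ : IsNormalized J) (i : ι) :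
      ∃ x, integralVector ι x ∈ (J : FractionalIdeal R⁰ (ι → ℚ)) ∧ x i = 1 := by
    obtain ⟨z, hz, hzi⟩ := (hJ i).1
    obtain ⟨x, rfl⟩ := hR.exists_integralVector_eq hJ hz
    exact ⟨x, hz, Int.cast_injective (α := ℚ) (by simpa [integralVector_apply] using hzi)⟩
  have hmul {u v : ι → ℤ} (hu : integralVector ι u ∈ (I : FractionalIdeal R⁰ (ι → ℚ)))
      (hv : integralVector ι v ∈ (↑I⁻¹ : FractionalIdeal R⁰ (ι → ℚ))) (e : E) :
      (u (Γ.tgt e) * v (Γ.tgt e) : ZMod (Γ.modulus e)) = u (Γ.src e) * v (Γ.src e) := by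
    obtain ⟨w, hw, hwuv⟩ := hR.mem_one_iff.mp (I.mul_inv ▸ FractionalIdeal.mul_mem_mul hu hv)
    rw [← map_mul, (integralVector_injective ι).eq_iff] at hwuv
    simpa [hwuv] using hw e
  choose x hx hxi using hunit hI
  choose y hy hyi using hunit hI.inv
  have hxy (e : E) : (x (Γ.src e) (Γ.tgt e) * y (Γ.src e) (Γ.tgt e) : ZMod (Γ.modulus e)) = 1 := by
    simpa [hxi, hyi] using hmul (hx (Γ.src e)) (hy (Γ.src e)) e
  refine ⟨fun e => Units.mkOfMulEqOne _ _ (hxy e), fun u hu e => ?_, fun v hv e => ?_⟩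
  · have h := hmul hu (hy (Γ.src e)) e
    rw [hyi, Int.cast_one, mul_one] at h
    change _ = (x (Γ.src e) (Γ.tgt e) : ZMod (Γ.modulus e)) * _
    linear_combination x (Γ.src e) (Γ.tgt e) * h - u (Γ.tgt e) * hxy e
  · have h := hmul (hx (Γ.src e)) hv e
    rw [hxi, Int.cast_one, one_mul] at h
    change _ = (y (Γ.src e) (Γ.tgt e) : ZMod (Γ.modulus e)) * _
    linear_combination y (Γ.src e) (Γ.tgt e) * h - v (Γ.tgt e) * hxy e

/-- The `R`-module of the vectors of `Γ.lattice g`. -/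
def twistSubmodule (g : Γ.Twist) : Submodule R (ι → ℚ) where
  __ := (Γ.lattice g).map (integralVector ι : (ι → ℤ) →+ (ι → ℚ))
  smul_mem' := by
    rintro r _ ⟨u, hu, rfl⟩
    obtain ⟨v, hv, hvr⟩ := (hR _).mp ⟨r, rfl⟩
    refine ⟨v * u, one_mul g ▸ mul_mem_lattice hv hu, ?_⟩
    rw [Algebra.smul_def, ← hvr]
    exact map_mul (integralVector ι) v u

variable [Finite E]

lemma isFractionRing [Finite ι] [FaithfulSMul R (ι → ℚ)] : IsFractionRing R (ι → ℚ) := by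
  refine isFractionRing_of_forall_exists_zsmul_mem_range fun x => ?_
  obtain ⟨⟨d, hd⟩, hdx⟩ := IsLocalization.exist_integer_multiples_of_finite ℤ⁰ x
  obtain ⟨n, hn0, hn⟩ := Γ.exists_ne_zero_forall_intCast_eq_zero
  choose u hu using hdx
  refine ⟨n * d, mul_ne_zero hn0 (nonZeroDivisors.ne_zero hd), (hR _).mpr
    ⟨n • u, mem_lattice_of_intCast_eq_zero fun e i => by simp [hn e], ?_⟩⟩
  ext i
  simpa [integralVector_apply, mul_assoc] using Or.inl (hu i)

section Twist

variable [IsFractionRing R (ι → ℚ)]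

/-- The fractional ideal of the vectors of `Γ.lattice g`. -/
def twist (g : Γ.Twist) : FractionalIdeal R⁰ (ι → ℚ) :=
  ⟨hR.twistSubmodule g, by
    obtain ⟨n, hn0, hn⟩ := Γ.exists_ne_zero_forall_intCast_eq_zero
    refine ⟨n, ?_, ?_⟩
    · refine mem_nonZeroDivisors_of_injective (IsFractionRing.injective R (ι → ℚ)) ?_
      rw [map_intCast]
      exact IsUnit.mem_nonZeroDivisors (Pi.isUnit_iff.mpr fun i => by simpa using hn0)
    · rintro _ ⟨u, -, rfl⟩
      refine (hR _).mpr ⟨n • u, mem_lattice_of_intCast_eq_zero fun e i => by simp [hn e], ?_⟩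
      rw [map_zsmul, Int.cast_smul_eq_zsmul]
      rfl⟩

variable {g h : Γ.Twist}

lemma mem_twist {x : ι → ℚ} : x ∈ hR.twist g ↔ ∃ u ∈ Γ.lattice g, integralVector ι u = x := Iff.rfl

lemma integralVector_mem_twist {u : ι → ℤ} : integralVector ι u ∈ hR.twist g ↔ u ∈ Γ.lattice g := by
  simp only [mem_twist, (integralVector_injective ι).eq_iff, exists_eq_right]

lemma twist_one : hR.twist 1 = 1 := by
  ext x
  rw [mem_twist, hR.mem_one_iff]

variable (g h) in
lemma twist_mul_le : hR.twist g * hR.twist h ≤ hR.twist (g * h) := by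
  rw [FractionalIdeal.mul_le]
  rintro _ ⟨u, hu, rfl⟩ _ ⟨v, hv, rfl⟩
  exact ⟨u * v, mul_mem_lattice hu hv, map_mul (integralVector ι) u v⟩

variable (g) in
lemma one_le_twist_mul_twist_inv : 1 ≤ hR.twist g * hR.twist g⁻¹ := by
  obtain ⟨u, hu, v, hv, w, huv, hw⟩ := exists_mem_lattice_mul_eq_one_add g
  have hmem {s t : ι → ℤ} (hs : s ∈ Γ.lattice g) (ht : t ∈ Γ.lattice g⁻¹) :
      integralVector ι (s * t) ∈ ((hR.twist g * hR.twist g⁻¹ :) : Submodule R (ι → ℚ)) := by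
    rw [map_mul]
    exact FractionalIdeal.mul_mem_mul (hR.integralVector_mem_twist.mpr hs)
      (hR.integralVector_mem_twist.mpr ht)
  have hw' {k : Γ.Twist} : w ∈ Γ.lattice k := mem_lattice_of_intCast_eq_zero hw
  have hwu : w * u ∈ Γ.lattice g := mem_lattice_of_intCast_eq_zero fun e i => by simp [hw e]
  -- The multiples of `w` lie in every lattice, so each summand is a product of the required kind.
  have hone : 1 = u * v - w * u * v + w * w := by linear_combination (w - 1) * huv
  rw [FractionalIdeal.one_le, ← map_one (integralVector ι), hone, map_add, map_sub]
  exact Submodule.add_mem _ (Submodule.sub_mem _ (hmem hu hv) (hmem hwu hv)) (hmem hw' hw')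

variable (g h) in
lemma twist_mul : hR.twist (g * h) = hR.twist g * hR.twist h := by
  refine le_antisymm ?_ (hR.twist_mul_le g h)
  calc hR.twist (g * h)
      ≤ hR.twist (g * h) * (hR.twist h⁻¹ * hR.twist h) :=
        le_mul_of_one_le_right' (by simpa using hR.one_le_twist_mul_twist_inv h⁻¹)
    _ ≤ hR.twist (g * h * h⁻¹) * hR.twist h := by
        rw [← mul_assoc]
        gcongr
        exact hR.twist_mul_le _ _
    _ = hR.twist g * hR.twist h := by rw [mul_inv_cancel_right]

/-- The homomorphism from twists to invertible fractional ideals. -/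
def twistHom : Γ.Twist →* (FractionalIdeal R⁰ (ι → ℚ))ˣ :=
  MonoidHom.toHomUnits
    { toFun := hR.twist
      map_one' := hR.twist_one
      map_mul' := hR.twist_mul }

lemma coe_twistHom : (hR.twistHom g : FractionalIdeal R⁰ (ι → ℚ)) = hR.twist g := rfl

lemma exists_principal_eq_twistHom_iff :
    (∃ k, principalFractionalIdeal R⁰ k = hR.twistHom g) ↔ g ∈ Γ.signTwist.range := by
  simp only [principalFractionalIdeal_eq_iff, ← map_inv, coe_twistHom]
  constructor
  · rintro ⟨k, ⟨u, hu, huk⟩, v, -, hvk⟩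
    have huv : u * v = 1 := integralVector_injective ι <|
      calc integralVector ι (u * v) = k * ↑k⁻¹ := by rw [map_mul, ← huk, ← hvk]; rfl
        _ = integralVector ι 1 := by rw [k.mul_inv, map_one]
    exact ⟨fun i => Units.mkOfMulEqOne (u i) (v i) (congrFun huv i), signTwist_eq_iff.mpr hu⟩
  · rintro ⟨ε, rfl⟩
    refine ⟨Units.map (integralVector ι) (MulEquiv.piUnits.symm ε), ?_, ?_⟩
    · exact hR.integralVector_mem_twist.mpr (signTwist_eq_iff.mp rfl)
    · exact hR.integralVector_mem_twist.mpr (signTwist_eq_iff.mp (map_inv _ ε))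

lemma exists_twistHom_eq (hI : IsNormalized I) : ∃ g, hR.twistHom g = I := by
  obtain ⟨g, hg, hg'⟩ := hR.exists_twist_forall_mem_lattice hI
  have hle : (I : FractionalIdeal R⁰ (ι → ℚ)) ≤ hR.twist g := fun z hz => by
    obtain ⟨u, rfl⟩ := hR.exists_integralVector_eq hI hz
    exact hR.integralVector_mem_twist.mpr (hg u hz)
  have hle' : (↑I⁻¹ : FractionalIdeal R⁰ (ι → ℚ)) ≤ hR.twist g⁻¹ := fun z hz => by
    obtain ⟨v, rfl⟩ := hR.exists_integralVector_eq hI.inv hz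
    exact hR.integralVector_mem_twist.mpr (hg' v hz)
  refine ⟨g, Units.ext (le_antisymm ?_ hle)⟩
  calc hR.twist g
      = hR.twist g * ↑I⁻¹ * I := by rw [mul_assoc, I.inv_mul, mul_one]
    _ ≤ hR.twist g * hR.twist g⁻¹ * I := by gcongr
    _ = I := by rw [← hR.twist_mul, mul_inv_cancel, hR.twist_one, one_mul]

end Twist

theorem nonempty_classGroupOf_mulEquiv [Finite ι] [FaithfulSMul R (ι → ℚ)] :
    Nonempty (classGroupOf R ≃* Γ.Twist ⧸ Γ.signTwist.range) := by
  have := hR.isFractionRing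
  let φ : Γ.Twist →* classGroupOf R := fractionalIdealClass.comp hR.twistHom
  have hφ : Function.Surjective φ := by
    intro κ
    obtain ⟨I, rfl⟩ := fractionalIdealClass_surjective (K := ι → ℚ) κ
    obtain ⟨k, hk⟩ := hR.exists_isNormalized_principal_mul I
    obtain ⟨g, hg⟩ := hR.exists_twistHom_eq hk
    refine ⟨g, ?_⟩
    rw [MonoidHom.comp_apply, hg, map_mul, fractionalIdealClass_eq_one_iff.mpr ⟨k, rfl⟩, one_mul]
  have hker : φ.ker = Γ.signTwist.range := by
    ext g
    rw [MonoidHom.mem_ker, MonoidHom.comp_apply, fractionalIdealClass_eq_one_iff,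
      hR.exists_principal_eq_twistHom_iff]
  exact hker ▸ ⟨(QuotientGroup.quotientKerEquivOfSurjective φ hφ).symm⟩

end IsOrder

theorem nonempty_classGroupOf_mulEquiv {ι E : Type*} [Finite ι] [Finite E]
    (Γ : CongruenceGraph ι E) {R : Type*} [CommRing R] {φ : R →+* (ι → ℤ)}
    (hφ : Function.Injective φ) (hrange : ∀ u, u ∈ φ.range ↔ u ∈ Γ.lattice 1) :
    Nonempty (classGroupOf R ≃* Γ.Twist ⧸ Γ.signTwist.range) := by
  let _ : Algebra R (ι → ℚ) := ((integralVector ι).comp φ).toAlgebra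
  have : FaithfulSMul R (ι → ℚ) := (faithfulSMul_iff_algebraMap_injective R (ι → ℚ)).mpr
    ((integralVector_injective ι).comp hφ)
  have hR : Γ.IsOrder R := by
    intro x
    simp only [← hrange, RingHom.mem_range, exists_exists_eq_and]
    rfl
  exact hR.nonempty_classGroupOf_mulEquiv

end CongruenceGraph

section EvalRoots

variable {ι A : Type*} [Fintype ι] [CommRing A] {a : ι → A}

/-- Evaluation of `A[X] / (∏ i, (X - a i))` at the roots `a i`. -/
noncomputable def evalRoots (a : ι → A) : A[X] ⧸ Ideal.span {∏ i, (X - C (a i))} →+* (ι → A) :=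
  Ideal.Quotient.lift _ (RingHom.pi fun i => evalRingHom (a i)) fun f hf => by
    obtain ⟨g, rfl⟩ := Ideal.mem_span_singleton.mp hf
    ext i
    change ((∏ j, (X - C (a j))) * g).eval (a i) = 0
    simp [eval_prod, Finset.prod_eq_zero (Finset.mem_univ i)]

lemma evalRoots_mk (f : A[X]) (i : ι) :
    evalRoots a (Ideal.Quotient.mk _ f) i = f.eval (a i) := rfl

lemma evalRoots_injective [IsDomain A] (ha : Function.Injective a) :
    Function.Injective (evalRoots a) := by
  rw [injective_iff_map_eq_zero, Ideal.Quotient.mk_surjective.forall]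
  intro f hf
  rw [Ideal.Quotient.eq_zero_iff_mem, Ideal.mem_span_singleton]
  rcases eq_or_ne f 0 with rfl | hf0
  · exact dvd_zero _
  have hroots : Finset.univ.val.map a ≤ f.roots := by
    rw [Multiset.le_iff_subset (Finset.univ.nodup.map ha)]
    intro x hx
    obtain ⟨i, -, rfl⟩ := Multiset.mem_map.mp hx
    exact (mem_roots hf0).mpr (congrFun hf i)
  simpa using! (Multiset.prod_X_sub_C_dvd_iff_le_roots hf0 _).mpr hroots

lemma sub_dvd_of_mem_range_evalRoots {u : ι → A} (hu : u ∈ (evalRoots a).range) (i j : ι) :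
    a i - a j ∣ u i - u j := by
  obtain ⟨y, rfl⟩ := hu
  obtain ⟨f, rfl⟩ := Ideal.Quotient.mk_surjective y
  exact sub_dvd_eval_sub _ _ f

lemma mem_range_evalRoots_iff {a : Fin 3 → A} (h : IsCoprime (a 1 - a 0) (a 2 - a 1))
    {u : Fin 3 → A} : u ∈ (evalRoots a).range ↔
      a 1 - a 0 ∣ u 1 - u 0 ∧ a 2 - a 1 ∣ u 2 - u 1 ∧ a 2 - a 0 ∣ u 2 - u 0 := by
  refine ⟨fun hu => ⟨sub_dvd_of_mem_range_evalRoots hu 1 0, sub_dvd_of_mem_range_evalRoots hu 2 1,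
    sub_dvd_of_mem_range_evalRoots hu 2 0⟩, ?_⟩
  rintro ⟨⟨k, hk⟩, ⟨l, hl⟩, ⟨m, hm⟩⟩
  obtain ⟨s, t, hst⟩ := h
  have h' : IsCoprime (a 2 - a 1) (a 2 - a 0) := ⟨t - s, s, by linear_combination hst⟩
  -- Newton interpolation: `k` is the first divided difference, `d` the second one.
  obtain ⟨d, hd⟩ : (a 2 - a 1) * (a 2 - a 0) ∣ u 2 - u 0 - k * (a 2 - a 0) :=
    h'.mul_dvd ⟨l - k, by linear_combination hl + hk⟩ ⟨m - k, by linear_combination hm⟩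
  refine ⟨Ideal.Quotient.mk _
    (C (u 0) + C k * (X - C (a 0)) + C d * ((X - C (a 0)) * (X - C (a 1)))), funext fun i => ?_⟩
  simp only [evalRoots_mk, eval_add, eval_mul, eval_sub, eval_X, eval_C]
  fin_cases i
  · simp
  · simp only [Fin.mk_one]
    linear_combination -hk
  · simp only [Fin.reduceFinMk]
    linear_combination -hd

end EvalRoots

section RootGraph

variable {a b c : ℤ}

/-- The triangle with vertices the roots `a < b < c` and edges labelled by their differences. -/
def rootGraph (hab : a < b) (hbc : b < c) (hcop : IsCoprime (b - a) (c - b)) :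
    CongruenceGraph (Fin 3) (Fin 3) where
  src := ![0, 1, 0]
  tgt := ![1, 2, 2]
  modulus := ![(b - a).toNat, (c - b).toNat, (c - a).toNat]
  src_ne_tgt := by decide
  modulus_ne_zero := by
    simp [Fin.forall_fin_succ, hab, hbc, hab.trans hbc]
  coprime_modulus := by
    have hNat {m n : ℤ} (hm : 0 < m) (hn : 0 < n) (h : IsCoprime m n) :
        Nat.Coprime m.toNat n.toNat := by
      rwa [← Nat.isCoprime_iff_coprime, Int.toNat_of_nonneg hm.le, Int.toNat_of_nonneg hn.le]
    obtain ⟨s, t, hst⟩ := hcop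
    have hp := sub_pos.mpr hab
    have hq := sub_pos.mpr hbc
    have hr := sub_pos.mpr (hab.trans hbc)
    have hpq := hNat hp hq ⟨s, t, hst⟩
    have hpr := hNat hp hr ⟨s - t, t, by linear_combination hst⟩
    have hqr := hNat hq hr ⟨t - s, s, by linear_combination hst⟩
    rw [pairwise_fin_succ_iff_of_isSymm, pairwise_fin_succ_iff_of_isSymm]
    simpa [Function.onFun, Fin.forall_fin_succ] using ⟨⟨hpq, hpr⟩, hqr⟩

lemma mem_rootGraph_lattice_one_iff (hab : a < b) (hbc : b < c) (hcop : IsCoprime (b - a) (c - b))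
    {u : Fin 3 → ℤ} : u ∈ (rootGraph hab hbc hcop).lattice 1 ↔
      b - a ∣ u 1 - u 0 ∧ c - b ∣ u 2 - u 1 ∧ c - a ∣ u 2 - u 0 := by
  have hdvd {m : ℤ} (hm : 0 < m) (s t : ℤ) : (t : ZMod m.toNat) = s ↔ m ∣ t - s := by
    rw [eq_comm, ZMod.intCast_eq_intCast_iff_dvd_sub, Int.toNat_of_nonneg hm.le]
  rw [← hdvd (sub_pos.mpr hab), ← hdvd (sub_pos.mpr hbc), ← hdvd (sub_pos.mpr (hab.trans hbc)),
    CongruenceGraph.mem_lattice]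
  simp only [Pi.one_apply, Units.val_one, one_mul, Fin.forall_fin_succ, IsEmpty.forall_iff,
    and_true]
  rfl

end RootGraph

/-- A family indexed by `Fin 3` as a triple. -/
def piFinThreeMulEquiv (M : Fin 3 → Type*) [∀ i, Mul (M i)] : (∀ i, M i) ≃* M 0 × M 1 × M 2 where
  toFun f := (f 0, f 1, f 2)
  invFun p := Fin.cons p.1 (Fin.cons p.2.1 (Fin.cons p.2.2 finZeroElim))
  left_inv f := by
    ext i
    fin_cases i <;> rfl
  right_inv _ := rfl
  map_mul' _ _ := rfl

lemma coe_map_signTwist_range_of_triangle (Γ : CongruenceGraph (Fin 3) (Fin 3))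
    (hsrc : Γ.src = ![0, 1, 0]) (htgt : Γ.tgt = ![1, 2, 2]) :
    (Γ.signTwist.range.map (piFinThreeMulEquiv fun e => (ZMod (Γ.modulus e))ˣ).toMonoidHom :
      Set ((ZMod (Γ.modulus 0))ˣ × (ZMod (Γ.modulus 1))ˣ × (ZMod (Γ.modulus 2))ˣ)) =
      {(1, 1, 1), (1, -1, -1), (-1, 1, -1), (-1, -1, 1)} := by
  let χ (e : Fin 3) : ℤˣ →* (ZMod (Γ.modulus e))ˣ := Units.map (Int.castRingHom _).toMonoidHom
  have hχ (e : Fin 3) : χ e (-1) = -1 := by ext; simp [χ]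
  have happly (ε : Fin 3 → ℤˣ) :
      piFinThreeMulEquiv (fun e => (ZMod (Γ.modulus e))ˣ) (Γ.signTwist ε) =
        (χ 0 (ε 1 / ε 0), χ 1 (ε 2 / ε 1), χ 2 (ε 2 / ε 0)) := by
    change (Γ.signTwist ε 0, Γ.signTwist ε 1, Γ.signTwist ε 2) = _
    simp only [CongruenceGraph.signTwist_apply, hsrc, htgt]
    rfl
  ext x
  constructor
  · rintro ⟨_, ⟨ε, rfl⟩, rfl⟩
    rw [MulEquiv.coe_toMonoidHom, happly]
    rcases Int.units_eq_one_or (ε 0) with h0 | h0 <;>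
      rcases Int.units_eq_one_or (ε 1) with h1 | h1 <;>
      rcases Int.units_eq_one_or (ε 2) with h2 | h2 <;> simp [h0, h1, h2, hχ]
  · rintro (rfl | rfl | rfl | rfl)
    · exact ⟨_, ⟨![1, 1, 1], rfl⟩, by simp [happly]⟩
    · exact ⟨_, ⟨![1, 1, -1], rfl⟩, by simp [happly, hχ]⟩
    · exact ⟨_, ⟨![-1, 1, 1], rfl⟩, by simp [happly, hχ]⟩
    · exact ⟨_, ⟨![1, -1, 1], rfl⟩, by simp [happly, hχ]⟩

/-- For integers `a < b < c` with `c - a ≥ 4` and `gcd(b-a, c-b, c-a) = 1`, and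
`R = ℤ[x]/((x-a)(x-b)(x-c))`, the class group `Cl(R)` is isomorphic to the quotient of
`(ℤ/(b-a))ˣ × (ℤ/(c-b))ˣ × (ℤ/(c-a))ˣ` by the subgroup
`{(1,1,1), (1,-1,-1), (-1,1,-1), (-1,-1,1)}` (the subgroup generated by `(1,-1,-1)` and
`(-1,1,-1)`). -/
theorem stmt_18 (a b c : ℤ) (hab : a < b) (hbc : b < c) (h4 : c - a ≥ 4)
    (hgcd : Int.gcd (b - a) (Int.gcd (c - b) (c - a)) = 1) :
    ∃ H : Subgroup ((ZMod (b - a).toNat)ˣ × (ZMod (c - b).toNat)ˣ × (ZMod (c - a).toNat)ˣ),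
      (H : Set ((ZMod (b - a).toNat)ˣ × (ZMod (c - b).toNat)ˣ × (ZMod (c - a).toNat)ˣ)) =
        {(1, 1, 1), (1, -1, -1), (-1, 1, -1), (-1, -1, 1)} ∧
      Nonempty (classGroupOf (ℤ[X] ⧸ Ideal.span {(X - C a) * (X - C b) * (X - C c)}) ≃*
        ((ZMod (b - a).toNat)ˣ × (ZMod (c - b).toNat)ˣ × (ZMod (c - a).toNat)ˣ) ⧸ H) := by
  have hcop : IsCoprime (b - a) (c - b) := by
    have hgcd' : Int.gcd (c - b) (c - a) = Int.gcd (b - a) (c - b) := by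
      rw [← sub_add_sub_cancel c b a, Int.gcd_self_add_right, Int.gcd_comm]
    rw [Int.isCoprime_iff_gcd_eq_one]
    simpa [hgcd'] using hgcd
  let Γ := rootGraph hab hbc hcop
  let θ : Γ.Twist ≃* (ZMod (b - a).toNat)ˣ × (ZMod (c - b).toNat)ˣ × (ZMod (c - a).toNat)ˣ :=
    piFinThreeMulEquiv fun e => (ZMod (Γ.modulus e))ˣ
  have hroots : Function.Injective ![a, b, c] :=
    (Fin.strictMono_iff_lt_succ.mpr (by simp [Fin.forall_fin_succ, hab, hbc])).injective
  obtain ⟨ψ⟩ := Γ.nonempty_classGroupOf_mulEquiv (evalRoots_injective hroots) fun u => by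
    rw [mem_rootGraph_lattice_one_iff, mem_range_evalRoots_iff hcop]
    rfl
  rw [Fin.prod_univ_three] at ψ
  exact ⟨Γ.signTwist.range.map θ.toMonoidHom, coe_map_signTwist_range_of_triangle Γ rfl rfl,
    ⟨ψ.trans (QuotientGroup.congr _ _ θ rfl)⟩⟩
end
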